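/- arXiv:2502.02099 — 3 statements merged into one kernel-verified Lean document; each statement's English description precedes it below -/
import Mathlib

section
/- If a matrix X ∈ S^d satisfies the second-order necessary conditions (2NC) for problem (BC), then every symmetric matrix F ∈ S^d with F² = X satisfies the second-order necessary conditions (2NC) for problem (DSS-Sym). -/
open Matrix

/-- `P` is the Moore–Penrose pseudoinverse of `X`. -/
def IsMoorePenrose {d : ℕ} (X P : Matrix (Fin d) (Fin d) ℝ) : Prop :=
  X * P * X = X ∧ P * X * P = P ∧ (X * P)ᵀ = X * P ∧ (P * X)ᵀ = P * X

/-- Second directional derivative `D²h_X[W,W]` of `h` at `X` along `W`. -/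
noncomputable def D2 {d : ℕ} (h : Matrix (Fin d) (Fin d) ℝ → ℝ)
    (X W : Matrix (Fin d) (Fin d) ℝ) : ℝ :=
  iteratedDeriv 2 (fun t : ℝ => h (X + t • W)) 0

/-- `gh` is the gradient of `h` on the space `S^d` of symmetric matrices, with respect to
the trace inner product `⟨A, B⟩ = tr(AᵀB)`. -/
def IsGradient {d : ℕ} (h : Matrix (Fin d) (Fin d) ℝ → ℝ)
    (gh : Matrix (Fin d) (Fin d) ℝ → Matrix (Fin d) (Fin d) ℝ) : Prop :=
  (∀ X : Matrix (Fin d) (Fin d) ℝ, X.IsSymm → (gh X).IsSymm) ∧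
  ∀ X W : Matrix (Fin d) (Fin d) ℝ, X.IsSymm → W.IsSymm →
    HasDerivAt (fun t : ℝ => h (X + t • W)) ((gh X)ᵀ * W).trace 0

/-- First-order conditions (BC-1C): `X ⪰ 0`, `∇h(X) ⪰ 0`, `∇h(X)X = 0`. -/
def BC1C {d : ℕ} (gh : Matrix (Fin d) (Fin d) ℝ → Matrix (Fin d) (Fin d) ℝ)
    (X : Matrix (Fin d) (Fin d) ℝ) : Prop :=
  X.PosSemidef ∧ (gh X).PosSemidef ∧ gh X * X = 0

/-- Second-order necessary conditions (BC-2NC). -/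
def BC2NC {d : ℕ} (h : Matrix (Fin d) (Fin d) ℝ → ℝ)
    (gh : Matrix (Fin d) (Fin d) ℝ → Matrix (Fin d) (Fin d) ℝ)
    (X : Matrix (Fin d) (Fin d) ℝ) : Prop :=
  BC1C gh X ∧
    ∀ V : Matrix (Fin d) (Fin (d - X.rank)) ℝ, Vᵀ * V = 1 → X * V = 0 →
      ∀ P : Matrix (Fin d) (Fin d) ℝ, IsMoorePenrose X P →
        ∀ W : Matrix (Fin d) (Fin d) ℝ, W.IsSymm → Vᵀ * W * V = 0 →
          0 ≤ D2 h X W + 2 * (W * P * W * gh X).trace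

/-- The symmetric product `A∘B = (ABᵀ + BAᵀ)/2`. -/
noncomputable def symProd {d : ℕ} (A B : Matrix (Fin d) (Fin d) ℝ) :
    Matrix (Fin d) (Fin d) ℝ :=
  (2⁻¹ : ℝ) • (A * Bᵀ + B * Aᵀ)

/-- Second-order necessary conditions (DSS-Sym-2NC) for `g(F) = h(F²)`, `F ∈ S^d`. -/
noncomputable def DSSSym2NC {d : ℕ} (h : Matrix (Fin d) (Fin d) ℝ → ℝ)
    (gh : Matrix (Fin d) (Fin d) ℝ → Matrix (Fin d) (Fin d) ℝ)
    (F : Matrix (Fin d) (Fin d) ℝ) : Prop :=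
  symProd (gh (F * F)) F = 0 ∧
    ∀ Δ : Matrix (Fin d) (Fin d) ℝ, Δ.IsSymm →
      0 ≤ D2 h (F * F) ((2 : ℝ) • symProd F Δ) + 2 * (gh (F * F) * (Δ * Δ)).trace

/-!
Write `G = ∇h(F²)`. As `F` is symmetric, `G F² = G F Fᵀ = 0` gives `G F = 0`, hence the first-order
condition. For a symmetric `Δ`, the direction `W = 2 F ∘ Δ = F Δ + Δ F` is admissible in the
second-order condition of (BC), since `F` vanishes on the null space of `F²`. Let `P` be a symmetric
pseudoinverse of `F²`. Then `Q = F P F` is an orthogonal projection, and `G F = F G = 0` reduces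
`tr(W P W G)` to `tr(G Δ Q Δ)`, which is at most `tr(G Δ²)` because `Q ⪯ 1` and `G ⪰ 0`.
-/

section Pseudoinverse

variable {R A : Type*} {p : A → Prop} [Semifield R] [StarRing R] [MetricSpace R]
  [IsTopologicalSemiring R] [ContinuousStar R] [Ring A] [StarRing A] [TopologicalSpace A]
  [Algebra R A] [ContinuousFunctionalCalculus R A p] {a : A}

theorem mul_cfc_inv_mul_self (ha : p a) (hc : ContinuousOn (·⁻¹) (spectrum R a)) :
    a * cfc (·⁻¹ : R → R) a * a = a := by
  calc a * cfc (·⁻¹ : R → R) a * a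
      = cfc (fun x : R ↦ x * x⁻¹ * x) a := by
        rw [cfc_mul (fun x : R ↦ x * x⁻¹) (fun x ↦ x) a, cfc_mul (fun x : R ↦ x) (·⁻¹) a,
          cfc_id' R a]
    _ = a := by simp only [mul_inv_mul_cancel, cfc_id' R a]

theorem cfc_inv_mul_mul_cfc_inv (ha : p a) (hc : ContinuousOn (·⁻¹) (spectrum R a)) :
    cfc (·⁻¹ : R → R) a * a * cfc (·⁻¹ : R → R) a = cfc (·⁻¹ : R → R) a := by
  calc cfc (·⁻¹ : R → R) a * a * cfc (·⁻¹ : R → R) a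
      = cfc (fun x : R ↦ x⁻¹ * x * x⁻¹) a := by
        rw [cfc_mul (fun x : R ↦ x⁻¹ * x) (·⁻¹) a, cfc_mul (·⁻¹ : R → R) (fun x ↦ x) a,
          cfc_id' R a]
    _ = cfc (·⁻¹ : R → R) a := by
        congr 1
        funext x
        simpa only [inv_inv] using mul_inv_mul_cancel x⁻¹

end Pseudoinverse

theorem exists_isSymm_isMoorePenrose {d : ℕ} {X : Matrix (Fin d) (Fin d) ℝ} (hX : X.IsSymm) :
    ∃ P : Matrix (Fin d) (Fin d) ℝ, P.IsSymm ∧ IsMoorePenrose X P := by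
  have hXsa : IsSelfAdjoint X := isHermitian_iff_isSymm.mpr hX
  have hc : ContinuousOn (·⁻¹) (spectrum ℝ X) := X.finite_real_spectrum.continuousOn _
  have hP : (cfc (·⁻¹ : ℝ → ℝ) X).IsSymm :=
    isHermitian_iff_isSymm.mp (cfc_predicate (p := IsSelfAdjoint) (·⁻¹ : ℝ → ℝ) X)
  have hcomm : Commute (cfc (·⁻¹ : ℝ → ℝ) X) X := (Commute.refl X).cfc_real (·⁻¹)
  refine ⟨_, hP, mul_cfc_inv_mul_self hXsa hc, cfc_inv_mul_mul_cfc_inv hXsa hc, ?_, ?_⟩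
  · rw [transpose_mul, hX.eq, hP.eq, hcomm.eq]
  · rw [transpose_mul, hX.eq, hP.eq, hcomm.eq]

theorem isStarProjection_mul_mul_self {R : Type*} [Semigroup R] [StarMul R] {f q : R}
    (hf : IsSelfAdjoint f) (hq : IsSelfAdjoint q) (h : q * (f * f) * q = q) :
    IsStarProjection (f * q * f) where
  isIdempotentElem :=
    calc f * q * f * (f * q * f) = f * (q * (f * f) * q) * f := by simp only [mul_assoc]
      _ = f * q * f := by rw [h]
  isSelfAdjoint := by
    simp only [IsSelfAdjoint, star_mul, hf.star_eq, hq.star_eq, mul_assoc]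

section NullSpace

variable {𝕜 m n : Type*} [RCLike 𝕜] [Finite m] [Fintype n]

theorem finrank_ker_toEuclideanLin [DecidableEq n] (A : Matrix m n 𝕜) :
    Module.finrank 𝕜 (toEuclideanLin A).ker = Fintype.card n - A.rank := by
  cases nonempty_fintype m
  classical
  have hrank := A.rank_eq_finrank_range_toLin (EuclideanSpace.basisFun m 𝕜).toBasis
    (EuclideanSpace.basisFun n 𝕜).toBasis
  rw [← toEuclideanLin_eq_toLin_orthonormal] at hrank
  have hnullity := (toEuclideanLin A).finrank_range_add_finrank_ker
  rw [finrank_euclideanSpace] at hnullity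
  omega

theorem exists_conjTranspose_mul_self_eq_one_and_mul_eq_zero (A : Matrix m n 𝕜) {k : ℕ}
    (hk : Fintype.card n - A.rank = k) :
    ∃ V : Matrix n (Fin k) 𝕜, Vᴴ * V = 1 ∧ A * V = 0 := by
  classical
  let b := (stdOrthonormalBasis 𝕜 (toEuclideanLin A).ker).reindex
    (finCongr ((finrank_ker_toEuclideanLin A).trans hk))
  refine ⟨of fun i j ↦ (b j : EuclideanSpace 𝕜 n) i, ?_, ?_⟩
  · ext i j
    have hb := orthonormal_iff_ite.mp b.orthonormal i j
    rw [Submodule.coe_inner, PiLp.inner_apply] at hb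
    simpa [mul_apply, one_apply, mul_comm] using hb
  · ext i j
    have hb : toEuclideanLin A (b j : EuclideanSpace 𝕜 n) = 0 := (b j).2
    exact congr($hb i)

end NullSpace

section Trace

variable {R m n : Type*} [Fintype m] [Fintype n] [CommRing R]

theorem trace_mul_conjTranspose_mul_mul_le_of_isStarProjection [PartialOrder R]
    [IsOrderedAddMonoid R] [StarRing R] {G : Matrix n n R} (hG : G.PosSemidef) {Q : Matrix m m R}
    (hQ : IsStarProjection Q) (B : Matrix m n R) :
    (G * (Bᴴ * Q * B)).trace ≤ (G * (Bᴴ * B)).trace := by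
  classical
  have hQ' : (1 - Q)ᴴ * (1 - Q) = 1 - Q := by
    rw [hQ.one_sub.isSelfAdjoint.isHermitian.eq, hQ.one_sub.isIdempotentElem.eq]
  rw [← sub_nonneg]
  calc (0 : R) ≤ ((1 - Q) * B * G * ((1 - Q) * B)ᴴ).trace :=
        (hG.mul_mul_conjTranspose_same _).trace_nonneg
    _ = (G * (Bᴴ * ((1 - Q)ᴴ * (1 - Q)) * B)).trace := by
        rw [Matrix.mul_assoc, trace_mul_comm, conjTranspose_mul]
        simp only [Matrix.mul_assoc]
    _ = (G * (Bᴴ * B)).trace - (G * (Bᴴ * Q * B)).trace := by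
        rw [hQ', Matrix.mul_sub, Matrix.sub_mul, Matrix.mul_one, Matrix.mul_sub, trace_sub]

theorem trace_anticommutator_mul_mul_anticommutator_mul {F G : Matrix n n R} (hFG : F * G = 0)
    (hGF : G * F = 0) (B P : Matrix n n R) :
    ((F * B + B * F) * P * (F * B + B * F) * G).trace = (G * (B * (F * P * F) * B)).trace := by
  have hleft : G * (F * B + B * F) = G * B * F := by
    rw [Matrix.mul_add, ← Matrix.mul_assoc, hGF, Matrix.zero_mul, zero_add, Matrix.mul_assoc]
  have hright : (F * B + B * F) * G = F * B * G := by
    rw [Matrix.add_mul, Matrix.mul_assoc B, hFG, Matrix.mul_zero, add_zero]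
  calc ((F * B + B * F) * P * (F * B + B * F) * G).trace
      = ((F * B + B * F) * P * F * B * G).trace := by
        rw [Matrix.mul_assoc _ _ G, hright]; simp only [Matrix.mul_assoc]
    _ = (G * (F * B + B * F) * P * F * B).trace := by
        rw [trace_mul_comm]; simp only [Matrix.mul_assoc]
    _ = (G * (B * (F * P * F) * B)).trace := by
        rw [hleft]; simp only [Matrix.mul_assoc]

theorem trace_anticommutator_mul_mul_anticommutator_mul_le [PartialOrder R]
    [IsOrderedAddMonoid R] [StarRing R] {F G P B : Matrix n n R} (hF : F.IsHermitian)
    (hP : P.IsHermitian) (hB : B.IsHermitian) (hG : G.PosSemidef) (hFG : F * G = 0)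
    (hGF : G * F = 0) (hPFFP : P * (F * F) * P = P) :
    ((F * B + B * F) * P * (F * B + B * F) * G).trace ≤ (G * (B * B)).trace := by
  have hQ : IsStarProjection (F * P * F) := isStarProjection_mul_mul_self hF hP hPFFP
  rw [trace_anticommutator_mul_mul_anticommutator_mul hFG hGF]
  simpa only [hB.eq] using trace_mul_conjTranspose_mul_mul_le_of_isStarProjection hG hQ B

end Trace

theorem conjTranspose_mul_anticommutator_mul_eq_zero {R m n : Type*} [Fintype n]
    [NonUnitalSemiring R] [StarRing R] {F : Matrix n n R} (hF : F.IsHermitian) {V : Matrix n m R}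
    (hFV : F * V = 0) (B : Matrix n n R) : Vᴴ * (F * B + B * F) * V = 0 := by
  have hVF : Vᴴ * F = 0 := by
    rw [← hF.eq, ← conjTranspose_mul, hFV, conjTranspose_zero]
  rw [Matrix.mul_add, Matrix.add_mul, ← Matrix.mul_assoc, hVF, ← Matrix.mul_assoc,
    Matrix.mul_assoc _ F, hFV, Matrix.mul_zero, Matrix.zero_mul, Matrix.zero_mul, add_zero]

theorem symProd_of_isSymm {d : ℕ} {A B : Matrix (Fin d) (Fin d) ℝ} (hA : A.IsSymm)
    (hB : B.IsSymm) : symProd A B = (2⁻¹ : ℝ) • (A * B + B * A) := by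
  rw [symProd, hA.eq, hB.eq]

theorem statement5_general {d : ℕ} {h : Matrix (Fin d) (Fin d) ℝ → ℝ}
    {gh : Matrix (Fin d) (Fin d) ℝ → Matrix (Fin d) (Fin d) ℝ} (hgrad : IsGradient h gh)
    {F : Matrix (Fin d) (Fin d) ℝ} (hF : F.IsSymm) (hFF : BC2NC h gh (F * F)) :
    DSSSym2NC h gh F := by
  obtain ⟨⟨-, hG, hGFF⟩, hsecond⟩ := hFF
  have hF' : F.IsHermitian := isHermitian_iff_isSymm.mpr hF
  have hFFsymm : (F * F).IsSymm := by rw [IsSymm, transpose_mul, hF.eq]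
  have hGsymm : (gh (F * F)).IsSymm := hgrad.1 _ hFFsymm
  have hGF : gh (F * F) * F = 0 :=
    (mul_self_mul_conjTranspose_eq_zero F _).mp (by rwa [hF'.eq])
  have hFG : F * gh (F * F) = 0 := by
    simpa only [transpose_mul, hF.eq, hGsymm.eq, transpose_zero] using congr(($hGF)ᵀ)
  refine ⟨by rw [symProd_of_isSymm hGsymm hF, hGF, hFG, add_zero, smul_zero], fun Δ hΔ ↦ ?_⟩
  obtain ⟨P, hP, hFFP⟩ := exists_isSymm_isMoorePenrose hFFsymm
  obtain ⟨V, hV, hFFV⟩ := exists_conjTranspose_mul_self_eq_one_and_mul_eq_zero (F * F)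
    (congrArg (· - (F * F).rank) (Fintype.card_fin d))
  have hFV : F * V = 0 := (conjTranspose_mul_self_mul_eq_zero F V).mp (by rwa [hF'.eq])
  have hWsymm : (F * Δ + Δ * F).IsSymm := by
    rw [IsSymm, transpose_add, transpose_mul, transpose_mul, hF.eq, hΔ.eq, add_comm]
  have hBC := hsecond V hV hFFV P hFFP (F * Δ + Δ * F) hWsymm
    (conjTranspose_mul_anticommutator_mul_eq_zero hF' hFV Δ)
  have htrace := trace_anticommutator_mul_mul_anticommutator_mul_le hF'
    (isHermitian_iff_isSymm.mpr hP) (isHermitian_iff_isSymm.mpr hΔ) hG hFG hGF hFFP.2.1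
  rw [symProd_of_isSymm hF hΔ, smul_inv_smul₀ two_ne_zero]
  linarith

/-- If `X ∈ S^d` satisfies 2NC for (BC), then every symmetric `F` with `F² = X`
satisfies 2NC for (DSS-Sym). -/
theorem statement5 {d : ℕ} (h : Matrix (Fin d) (Fin d) ℝ → ℝ)
    (gh : Matrix (Fin d) (Fin d) ℝ → Matrix (Fin d) (Fin d) ℝ)
    (hsm : ContDiff ℝ 2 (fun A : Fin d → Fin d → ℝ => h (Matrix.of A)))
    (hgrad : IsGradient h gh)
    (X : Matrix (Fin d) (Fin d) ℝ) (hXsymm : X.IsSymm)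
    (hX : BC2NC h gh X)
    (F : Matrix (Fin d) (Fin d) ℝ) (hFsymm : F.IsSymm) (hF : F * F = X) :
    DSSSym2NC h gh F := by
  subst hF
  exact statement5_general hgrad hFsymm hX
end

section
/- If a symmetric matrix F ∈ S^d satisfies the second-order necessary conditions (2NC) for problem (DSS-Sym) and, in addition, F satisfies the eigenvalue condition (EC), then the matrix X = F² satisfies the second-order necessary conditions (2NC) for problem (BC). -/
open Matrix

/-- `a` is an eigenvalue of `F`. -/
def IsEigOf {d : ℕ} (F : Matrix (Fin d) (Fin d) ℝ) (a : ℝ) : Prop :=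
  ∃ v : Fin d → ℝ, v ≠ 0 ∧ F.mulVec v = a • v

/-- The eigenvalue condition (EC): no two nonzero eigenvalues of `F` sum to `0`. -/
def EigCond {d : ℕ} (F : Matrix (Fin d) (Fin d) ℝ) : Prop :=
  ∀ a b : ℝ, IsEigOf F a → IsEigOf F b → a ≠ 0 → b ≠ 0 → a + b ≠ 0

/-!
Write `G = ∇h(F²)`. The eigenvalue condition says that the Lyapunov operator `Δ ↦ FΔ + ΔF` is as
nondegenerate as it can be: its range is exactly the set of symmetric `W` that vanish on `ker F`.
This operator is self-adjoint, so the first-order condition `FG + GF = 0` makes `G` orthogonal to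
that range, in particular to `F²G + GF²`; this reads `‖FG‖² = 0`.

An eigenvector `v` of `G` with nonzero eigenvalue therefore lies in `ker F`, and the second-order
inequality in the direction `Δ = vvᵀ`, for which `F ∘ Δ = 0`, shows that the eigenvalue is
nonnegative. Finally, a direction `W` allowed in (BC) vanishes on `ker F`, hence has the form
`FΔ + ΔF` with `Δ` vanishing on `ker F` too, and then `tr(W X† W G) = tr(G Δ²)`, so that the two
second-order inequalities coincide.
-/

section VanishesOnKer

variable {k l m n R K : Type*} [Fintype n]

/-- The bilinear form of `W` vanishes on the null space of `A`. For a matrix `V` whose columns span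
that null space this is the condition `Vᵀ * W * V = 0`. -/
def VanishesOnKer [NonUnitalNonAssocSemiring R] (A : Matrix m n R) (W : Matrix n n R) : Prop :=
  ∀ ⦃u v : n → R⦄, A *ᵥ u = 0 → A *ᵥ v = 0 → u ⬝ᵥ W *ᵥ v = 0

theorem VanishesOnKer.transpose_mul_mul_eq_zero [NonUnitalSemiring R] {A : Matrix m n R}
    {W : Matrix n n R} (hW : VanishesOnKer A W) {B : Matrix n k R} {C : Matrix n l R}
    (hB : A * B = 0) (hC : A * C = 0) : Bᵀ * W * C = 0 := by
  ext i j
  rw [Matrix.mul_assoc]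
  exact hW (funext fun a => congrFun (congrFun hB a) i) (funext fun a => congrFun (congrFun hC a) j)

theorem VanishesOnKer.of_mul [Fintype m] [NonUnitalSemiring R] {B : Matrix l m R}
    {A : Matrix m n R} {W : Matrix n n R} (hW : VanishesOnKer (B * A) W) : VanishesOnKer A W :=
  fun u v hu hv => hW (by rw [← mulVec_mulVec, hu, mulVec_zero])
    (by rw [← mulVec_mulVec, hv, mulVec_zero])

theorem VanishesOnKer.conj [CommSemiring R] [DecidableEq n] {A W U : Matrix n n R}
    (hW : VanishesOnKer A W) (hU : Uᵀ * U = 1) : VanishesOnKer (U * A * Uᵀ) (U * W * Uᵀ) := by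
  have mem_ker : ∀ u, (U * A * Uᵀ) *ᵥ u = 0 → A *ᵥ Uᵀ *ᵥ u = 0 := fun u hu => by
    calc A *ᵥ Uᵀ *ᵥ u = Uᵀ *ᵥ (U * A * Uᵀ) *ᵥ u := by
          simp only [mulVec_mulVec, ← Matrix.mul_assoc, hU, Matrix.one_mul]
      _ = 0 := by rw [hu, mulVec_zero]
  intro u v hu hv
  calc u ⬝ᵥ (U * W * Uᵀ) *ᵥ v = (Uᵀ *ᵥ u) ⬝ᵥ W *ᵥ (Uᵀ *ᵥ v) := by
        rw [← mulVec_mulVec, ← mulVec_mulVec, dotProduct_mulVec, mulVec_transpose U u]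
    _ = 0 := hW (mem_ker u hu) (mem_ker v hv)

theorem mulVec_mulVec_eq_self_of_mulVec_eq_zero [Fintype k] [DecidableEq k] [Field K]
    {A : Matrix m n K} {V : Matrix n k K} {L : Matrix k n K} (hLV : L * V = 1) (hAV : A * V = 0)
    (hcard : Fintype.card n ≤ A.rank + Fintype.card k) {x : n → K} (hx : A *ᵥ x = 0) :
    V *ᵥ L *ᵥ x = x := by
  have hL : ∀ y, L *ᵥ V *ᵥ y = y := fun y => by rw [mulVec_mulVec, hLV, one_mulVec]
  have range_le : V.mulVecLin.range ≤ A.mulVecLin.ker := by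
    rintro _ ⟨y, rfl⟩
    simp [mulVec_mulVec, hAV]
  have finrank_range : Module.finrank K V.mulVecLin.range = Fintype.card k := by
    have hinj : Function.Injective V.mulVecLin := Function.LeftInverse.injective (g := L.mulVec) hL
    rw [LinearMap.finrank_range_of_inj hinj, Module.finrank_fintype_fun_eq_card]
  have finrank_ker : A.rank + Module.finrank K A.mulVecLin.ker = Fintype.card n := by
    rw [Matrix.rank, LinearMap.finrank_range_add_finrank_ker, Module.finrank_fintype_fun_eq_card]
  have range_eq := Submodule.eq_of_le_of_finrank_le range_le (by lia)
  obtain ⟨y, rfl⟩ : x ∈ V.mulVecLin.range := range_eq ▸ hx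
  exact congrArg (V *ᵥ ·) (hL y)

theorem vanishesOnKer_of_transpose_mul_mul_eq_zero [Fintype k] [DecidableEq k] [Field K]
    {A : Matrix m n K} {W : Matrix n n K} {V : Matrix n k K} (hV : Vᵀ * V = 1) (hAV : A * V = 0)
    (hcard : Fintype.card n ≤ A.rank + Fintype.card k) (hW : Vᵀ * W * V = 0) :
    VanishesOnKer A W := by
  intro u v hu hv
  rw [← mulVec_mulVec_eq_self_of_mulVec_eq_zero hV hAV hcard hu,
    ← mulVec_mulVec_eq_self_of_mulVec_eq_zero hV hAV hcard hv]
  calc (V *ᵥ Vᵀ *ᵥ u) ⬝ᵥ W *ᵥ V *ᵥ Vᵀ *ᵥ v = (Vᵀ *ᵥ u) ⬝ᵥ (Vᵀ * W * V) *ᵥ Vᵀ *ᵥ v := by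
        rw [← mulVec_mulVec, ← mulVec_mulVec, dotProduct_mulVec (Vᵀ *ᵥ u) Vᵀ, vecMul_transpose]
    _ = 0 := by rw [hW, zero_mulVec, dotProduct_zero]

end VanishesOnKer

section Lyapunov

theorem exists_diagonal_mul_add_mul_diagonal_eq {n K : Type*} [Fintype n] [DecidableEq n] [Field K]
    {s : n → K} (hs : ∀ i j, s i + s j = 0 → s i = 0) {W : Matrix n n K} (hW : W.IsSymm)
    (hWs : VanishesOnKer (diagonal s) W) :
    ∃ Δ : Matrix n n K, Δ.IsSymm ∧ VanishesOnKer (diagonal s) Δ ∧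
      diagonal s * Δ + Δ * diagonal s = W := by
  have hs' : ∀ i j, s i + s j = 0 → s j = 0 := fun i j h => hs j i (by rwa [add_comm])
  -- Where `s i + s j = 0`, division by zero makes the entry vanish.
  refine ⟨of fun i j => W i j / (s i + s j), ?_, ?_, ?_⟩
  · ext i j
    simp only [transpose_apply, of_apply, hW.apply, add_comm]
  · intro u v hu hv
    have hsu : ∀ i, s i * u i = 0 := fun i => by rw [← mulVec_diagonal, hu, Pi.zero_apply]
    have hsv : ∀ j, s j * v j = 0 := fun j => by rw [← mulVec_diagonal, hv, Pi.zero_apply]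
    refine Finset.sum_eq_zero fun i _ => mul_eq_zero.mpr (or_iff_not_imp_left.mpr fun hui => ?_)
    refine Finset.sum_eq_zero fun j _ => mul_eq_zero.mpr (or_iff_not_imp_right.mpr fun hvj => ?_)
    have hi : s i = 0 := (mul_eq_zero.mp (hsu i)).resolve_right hui
    have hj : s j = 0 := (mul_eq_zero.mp (hsv j)).resolve_right hvj
    simp only [of_apply, hi, hj, add_zero, div_zero]
  · ext i j
    simp only [Matrix.add_apply, diagonal_mul, mul_diagonal, of_apply]
    by_cases hij : s i + s j = 0
    · have single_mem_ker : ∀ a, s a = 0 → diagonal s *ᵥ Pi.single a 1 = 0 := fun a ha => by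
        rw [diagonal_mulVec_single, ha, zero_mul, Pi.single_zero]
      have hWij : W i j = 0 := by
        simpa using hWs (single_mem_ker i (hs i j hij)) (single_mem_ker j (hs' i j hij))
      rw [hWij, zero_div, mul_zero, zero_mul, add_zero]
    · field_simp

variable {d : ℕ} {F : Matrix (Fin d) (Fin d) ℝ}

theorem EigCond.exists_eq_mul_diagonal_mul_transpose (hEC : EigCond F) (hF : F.IsSymm) :
    ∃ (U : Matrix (Fin d) (Fin d) ℝ) (s : Fin d → ℝ), Uᵀ * U = 1 ∧ F = U * diagonal s * Uᵀ ∧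
      ∀ i j, s i + s j = 0 → s i = 0 := by
  have hH : F.IsHermitian := isHermitian_iff_isSymm.mpr hF
  have isEigOf : ∀ i, IsEigOf F (hH.eigenvalues i) := fun i =>
    ⟨_, (WithLp.ofLp_eq_zero 2).not.mpr (hH.eigenvectorBasis.orthonormal.ne_zero i),
      hH.mulVec_eigenvectorBasis i⟩
  refine ⟨hH.eigenvectorUnitary, hH.eigenvalues, ?_, ?_, fun i j hij => ?_⟩
  · simpa only [star_eq_conjTranspose, conjTranspose_eq_transpose_of_trivial] using
      Unitary.coe_star_mul_self hH.eigenvectorUnitary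
  · have := hH.spectral_theorem
    rwa [Unitary.conjStarAlgAut_apply, star_eq_conjTranspose,
      conjTranspose_eq_transpose_of_trivial] at this
  · by_contra hi
    exact hEC _ _ (isEigOf i) (isEigOf j) hi (fun hj => hi (by simpa [hj] using hij)) hij

theorem EigCond.exists_mul_add_mul_eq (hEC : EigCond F) (hF : F.IsSymm)
    {W : Matrix (Fin d) (Fin d) ℝ} (hW : W.IsSymm) (hWF : VanishesOnKer F W) :
    ∃ Δ : Matrix (Fin d) (Fin d) ℝ, Δ.IsSymm ∧ VanishesOnKer F Δ ∧ F * Δ + Δ * F = W := by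
  obtain ⟨U, s, hU, rfl, hs⟩ := hEC.exists_eq_mul_diagonal_mul_transpose hF
  have hU' : U * Uᵀ = 1 := mul_eq_one_comm.mp hU
  have cancel : ∀ A B : Matrix (Fin d) (Fin d) ℝ, U * A * Uᵀ * (U * B * Uᵀ) = U * (A * B) * Uᵀ :=
    fun A B => by rw [show U * A * Uᵀ * (U * B * Uᵀ) = U * A * (Uᵀ * U) * B * Uᵀ by noncomm_ring,
      hU, mul_one, mul_assoc U A B]
  have cancel' : ∀ A : Matrix (Fin d) (Fin d) ℝ, Uᵀ * (U * A * Uᵀ) * U = A := fun A => by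
    rw [show Uᵀ * (U * A * Uᵀ) * U = Uᵀ * U * A * (Uᵀ * U) by noncomm_ring, hU, one_mul, mul_one]
  have hWs : VanishesOnKer (diagonal s) (Uᵀ * W * U) := by
    simpa only [transpose_transpose, cancel'] using hWF.conj (U := Uᵀ) hU'
  have hWsymm : (Uᵀ * W * U).IsSymm := by
    simp only [IsSymm, transpose_mul, transpose_transpose, hW.eq, mul_assoc]
  obtain ⟨Δ, hΔ, hΔs, hΔW⟩ := exists_diagonal_mul_add_mul_diagonal_eq hs hWsymm hWs
  refine ⟨U * Δ * Uᵀ, ?_, hΔs.conj hU, ?_⟩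
  · simp only [IsSymm, transpose_mul, transpose_transpose, hΔ.eq, mul_assoc]
  · rw [cancel, cancel, ← add_mul, ← mul_add, hΔW,
      show U * (Uᵀ * W * U) * Uᵀ = U * Uᵀ * W * (U * Uᵀ) by noncomm_ring, hU', one_mul, mul_one]

theorem EigCond.mul_eq_zero_of_mul_add_mul_eq_zero (hEC : EigCond F) (hF : F.IsSymm)
    {G : Matrix (Fin d) (Fin d) ℝ} (hG : G.IsSymm) (h : F * G + G * F = 0) : F * G = 0 := by
  set W := F * F * G + G * (F * F) with hWdef
  have hW : W.IsSymm := by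
    simp only [IsSymm, hWdef, transpose_add, transpose_mul, hF.eq, hG.eq, mul_assoc, add_comm]
  have hWF : VanishesOnKer F W := fun u v hu hv => by
    have huF : u ᵥ* F = 0 := by rw [← mulVec_transpose, hF.eq, hu]
    rw [hWdef, add_mulVec, ← mul_assoc G, mul_assoc F, ← mulVec_mulVec v, ← mulVec_mulVec v (G * F),
      hv, mulVec_zero, add_zero, dotProduct_mulVec, huF, zero_dotProduct]
  obtain ⟨Δ, -, -, hΔ⟩ := hEC.exists_mul_add_mul_eq hF hW hWF
  have trace_mul_W : (G * W).trace = 0 := by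
    calc (G * W).trace = ((F * G + G * F) * Δ).trace := by
          rw [← hΔ, mul_add, add_mul, trace_add, trace_add, ← mul_assoc G Δ F,
            trace_mul_cycle G Δ F, add_comm, mul_assoc G F Δ]
      _ = 0 := by rw [h, zero_mul, trace_zero]
  have trace_sq : 2 * ((F * G)ᴴ * (F * G)).trace = (G * W).trace := by
    rw [conjTranspose_eq_transpose_of_trivial, transpose_mul, hF.eq, hG.eq, hWdef, mul_add,
      trace_add, two_mul, trace_mul_comm G (G * (F * F))]
    simp only [mul_assoc]
  exact trace_conjTranspose_mul_self_eq_zero_iff.mp (by linarith)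

end Lyapunov

section GeneralizedInverse

variable {n : Type*} [Fintype n]

theorem mul_innerInverse_sq_mul_cancel {R : Type*} [PartialOrder R] [Ring R] [StarRing R]
    [StarOrderedRing R] [NoZeroDivisors R] {F P : Matrix n n R} (hF : F.IsHermitian)
    (hP : F * F * P * (F * F) = F * F) : F * P * F * F = F ∧ F * (F * P * F) = F := by
  classical
  have cancel_left : ∀ A : Matrix n n R, F * F * A = 0 → F * A = 0 := fun A hA =>
    (conjTranspose_mul_self_mul_eq_zero F A).mp (by rwa [hF.eq])
  have cancel_right : ∀ A : Matrix n n R, A * (F * F) = 0 → A * F = 0 := fun A hA =>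
    (mul_self_mul_conjTranspose_eq_zero F A).mp (by rwa [hF.eq])
  constructor
  · have := cancel_left (P * (F * F) - 1) (by rw [mul_sub, ← mul_assoc, hP, mul_one, sub_self])
    simpa only [mul_sub, mul_one, mul_assoc, sub_eq_zero] using this
  · have := cancel_right (F * F * P - 1) (by rw [sub_mul, hP, one_mul, sub_self])
    simpa only [sub_mul, one_mul, mul_assoc, sub_eq_zero] using this

theorem trace_mul_innerInverse_mul_of_vanishesOnKer {R : Type*} [CommRing R]
    {F P G Δ : Matrix n n R} (hF : F.IsSymm) (hQF : F * P * F * F = F)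
    (hFQ : F * (F * P * F) = F) (hFG : F * G = 0) (hGF : G * F = 0) (hΔ : VanishesOnKer F Δ) :
    ((F * Δ + Δ * F) * P * (F * Δ + Δ * F) * G).trace = (G * (Δ * Δ)).trace := by
  classical
  -- `Z` is the projection onto `ker F` along the range of `F`.
  set Z := 1 - F * P * F with hZ
  have hFZ : F * Z = 0 := by rw [hZ, mul_sub, mul_one, hFQ, sub_self]
  have hFZt : F * Zᵀ = 0 := by
    rw [← transpose_eq_zero, transpose_mul, transpose_transpose, hF.eq, hZ, sub_mul, one_mul, hQF,
      sub_self]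
  have hZΔZ : Z * Δ * Z = 0 := by simpa using hΔ.transpose_mul_mul_eq_zero hFZt hFZ
  have hZG : Z * G = G := by
    rw [hZ, sub_mul, one_mul, mul_assoc _ F G, hFG, mul_zero, sub_zero]
  have hWG : (F * Δ + Δ * F) * G = F * Δ * G := by
    rw [add_mul, mul_assoc Δ, hFG, mul_zero, add_zero]
  have hGW : G * (F * Δ + Δ * F) = G * Δ * F := by
    rw [mul_add, ← mul_assoc, hGF, zero_mul, zero_add, mul_assoc]
  have trace_Z : (G * Δ * Z * Δ).trace = 0 := by
    calc (G * Δ * Z * Δ).trace = (Z * (G * Δ * Z * Δ)).trace := by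
          simp only [← mul_assoc, hZG]
      _ = (G * Δ * (Z * Δ * Z)).trace := by rw [trace_mul_comm]; simp only [mul_assoc]
      _ = 0 := by rw [hZΔZ, mul_zero, trace_zero]
  calc ((F * Δ + Δ * F) * P * (F * Δ + Δ * F) * G).trace
      = ((F * Δ + Δ * F) * (P * F * Δ * G)).trace := by
        rw [mul_assoc _ _ G, hWG]; simp only [mul_assoc]
    _ = (G * (F * Δ + Δ * F) * (P * F * Δ)).trace := by
        rw [← mul_assoc, trace_mul_comm, ← mul_assoc]
    _ = (G * Δ * (1 - Z) * Δ).trace := by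
        rw [hGW, hZ, sub_sub_cancel]; simp only [mul_assoc]
    _ = (G * (Δ * Δ)).trace := by
        rw [mul_sub, mul_one, sub_mul, trace_sub, trace_Z, sub_zero, mul_assoc]

end GeneralizedInverse

open scoped ComplexOrder in
theorem posSemidef_of_nonneg_on_ker {m n 𝕜 : Type*} [Fintype n] [RCLike 𝕜] {F : Matrix m n 𝕜}
    {G : Matrix n n 𝕜} (hG : G.IsHermitian) (hFG : F * G = 0)
    (hnonneg : ∀ v, F *ᵥ v = 0 → 0 ≤ star v ⬝ᵥ G *ᵥ v) : G.PosSemidef := by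
  classical
  refine hG.posSemidef_iff_eigenvalues_nonneg.mpr fun i => ?_
  set v : n → 𝕜 := ⇑(hG.eigenvectorBasis i)
  have hGv : G *ᵥ v = hG.eigenvalues i • v := hG.mulVec_eigenvectorBasis i
  rcases eq_or_ne (hG.eigenvalues i) 0 with h0 | h0
  · exact h0.ge
  have hFv : F *ᵥ v = 0 := by
    calc F *ᵥ v = (hG.eigenvalues i)⁻¹ • (F * G) *ᵥ v := by
          rw [← mulVec_mulVec, hGv, mulVec_smul, inv_smul_smul₀ h0]
      _ = 0 := by rw [hFG, zero_mulVec, smul_zero]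
  rw [hG.eigenvalues_eq]
  exact (RCLike.nonneg_iff.mp (hnonneg v hFv)).1

section SecondOrder

variable {d : ℕ} {h : Matrix (Fin d) (Fin d) ℝ → ℝ}
  {gh : Matrix (Fin d) (Fin d) ℝ → Matrix (Fin d) (Fin d) ℝ} {F : Matrix (Fin d) (Fin d) ℝ}

theorem two_smul_symProd {A B : Matrix (Fin d) (Fin d) ℝ} (hA : A.IsSymm) (hB : B.IsSymm) :
    (2 : ℝ) • symProd A B = A * B + B * A := by
  rw [symProd, hA.eq, hB.eq, smul_inv_smul₀ two_ne_zero]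

theorem D2_zero_right (X : Matrix (Fin d) (Fin d) ℝ) : D2 h X 0 = 0 := by
  simp [D2, iteratedDeriv_const]

theorem DSSSym2NC.mul_gradient_eq_zero (h2 : DSSSym2NC h gh F) (hEC : EigCond F) (hF : F.IsSymm)
    (hG : (gh (F * F)).IsSymm) : F * gh (F * F) = 0 :=
  hEC.mul_eq_zero_of_mul_add_mul_eq_zero hF hG <| by
    rw [add_comm, ← two_smul_symProd hG hF, h2.1, smul_zero]

theorem DSSSym2NC.nonneg_of_isSymm (h2 : DSSSym2NC h gh F) (hF : F.IsSymm)
    {Δ : Matrix (Fin d) (Fin d) ℝ} (hΔ : Δ.IsSymm) :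
    0 ≤ D2 h (F * F) (F * Δ + Δ * F) + 2 * (gh (F * F) * (Δ * Δ)).trace :=
  two_smul_symProd hF hΔ ▸ h2.2 Δ hΔ

theorem DSSSym2NC.dotProduct_gradient_mulVec_nonneg (h2 : DSSSym2NC h gh F) (hF : F.IsSymm)
    {v : Fin d → ℝ} (hv : F *ᵥ v = 0) : 0 ≤ v ⬝ᵥ gh (F * F) *ᵥ v := by
  rcases eq_or_ne v 0 with rfl | hv0
  · rw [zero_dotProduct]
  have hΔ : (vecMulVec v v).IsSymm := transpose_vecMulVec v v
  have hvF : v ᵥ* F = 0 := by rw [← mulVec_transpose, hF.eq, hv]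
  have hW : F * vecMulVec v v + vecMulVec v v * F = 0 := by
    rw [mul_vecMulVec, hv, zero_vecMulVec, vecMulVec_mul, hvF, vecMulVec_zero, add_zero]
  have trace_eq : (gh (F * F) * (vecMulVec v v * vecMulVec v v)).trace =
      (v ⬝ᵥ v) * (v ⬝ᵥ gh (F * F) *ᵥ v) := by
    rw [vecMulVec_mul_vecMulVec, mul_vecMulVec, trace_vecMulVec, dotProduct_smul, smul_eq_mul,
      dotProduct_comm (gh (F * F) *ᵥ v)]
  have hnonneg := h2.nonneg_of_isSymm hF hΔ
  rw [hW, D2_zero_right, zero_add, trace_eq] at hnonneg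
  have hvv : 0 < v ⬝ᵥ v := by simpa using dotProduct_star_self_pos_iff.mpr hv0
  exact nonneg_of_mul_nonneg_right (by linarith) hvv

theorem DSSSym2NC.posSemidef_gradient (h2 : DSSSym2NC h gh F) (hEC : EigCond F) (hF : F.IsSymm)
    (hG : (gh (F * F)).IsSymm) : (gh (F * F)).PosSemidef :=
  posSemidef_of_nonneg_on_ker (isHermitian_iff_isSymm.mpr hG)
    (h2.mul_gradient_eq_zero hEC hF hG) fun _ hv => h2.dotProduct_gradient_mulVec_nonneg hF hv

end SecondOrder

/-- If a symmetric `F ∈ S^d` satisfies 2NC for (DSS-Sym) and the eigenvalue condition (EC),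
then `X = F²` satisfies 2NC for (BC). -/
theorem statement7 {d : ℕ} (h : Matrix (Fin d) (Fin d) ℝ → ℝ)
    (gh : Matrix (Fin d) (Fin d) ℝ → Matrix (Fin d) (Fin d) ℝ)
    (hsm : ContDiff ℝ 2 (fun A : Fin d → Fin d → ℝ => h (Matrix.of A)))
    (hgrad : IsGradient h gh)
    (F : Matrix (Fin d) (Fin d) ℝ) (hFsymm : F.IsSymm)
    (hF : DSSSym2NC h gh F) (hEC : EigCond F) :
    BC2NC h gh (F * F) := by
  have hXsymm : (F * F).IsSymm := by rw [IsSymm, transpose_mul, hFsymm.eq]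
  have hG : (gh (F * F)).IsSymm := hgrad.1 _ hXsymm
  have hX : (F * F).PosSemidef := by
    simpa [hFsymm.eq] using posSemidef_conjTranspose_mul_self F
  have hFG : F * gh (F * F) = 0 := hF.mul_gradient_eq_zero hEC hFsymm hG
  have hGF : gh (F * F) * F = 0 := by
    rw [← transpose_eq_zero, transpose_mul, hFsymm.eq, hG.eq, hFG]
  refine ⟨⟨hX, hF.posSemidef_gradient hEC hFsymm hG, by rw [← mul_assoc, hGF, zero_mul]⟩, ?_⟩
  intro V hV hXV P hP W hW hVWV
  have hcard : Fintype.card (Fin d) ≤ (F * F).rank + Fintype.card (Fin (d - (F * F).rank)) := by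
    simpa only [Fintype.card_fin] using le_add_tsub
  have hWF : VanishesOnKer F W :=
    (vanishesOnKer_of_transpose_mul_mul_eq_zero hV hXV hcard hVWV).of_mul
  obtain ⟨Δ, hΔ, hΔF, rfl⟩ := hEC.exists_mul_add_mul_eq hFsymm hW hWF
  obtain ⟨hQF, hFQ⟩ := mul_innerInverse_sq_mul_cancel (isHermitian_iff_isSymm.mpr hFsymm) hP.1
  rw [trace_mul_innerInverse_mul_of_vanishesOnKer hFsymm hQF hFQ hFG hGF hΔF]
  exact hF.nonneg_of_isSymm hFsymm hΔ
end

section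
/- If a triple (x,F,Λ) ∈ R^n × R^{d×d} × S^d satisfies the second-order necessary conditions (2NC) for problem (SSV), then the pair (x,Λ) satisfies the second-order necessary conditions (2NC) for problem (NSDP). -/
open Matrix

/-- The directional derivative `DC_x[z]` of the matrix-valued map `C` at `x` along `z`. -/
noncomputable def DC {n d : ℕ} (C : (Fin n → ℝ) → Matrix (Fin d) (Fin d) ℝ)
    (x z : Fin n → ℝ) : Matrix (Fin d) (Fin d) ℝ :=
  Matrix.of fun i j => deriv (fun t : ℝ => C (x + t • z) i j) 0

/-- The second directional derivative `D²C_x[z,z]`. -/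
noncomputable def D2C {n d : ℕ} (C : (Fin n → ℝ) → Matrix (Fin d) (Fin d) ℝ)
    (x z : Fin n → ℝ) : Matrix (Fin d) (Fin d) ℝ :=
  Matrix.of fun i j => iteratedDeriv 2 (fun t : ℝ => C (x + t • z) i j) 0

/-- The second directional derivative `D²f_x[z,z]`. -/
noncomputable def D2f {n : ℕ} (f : (Fin n → ℝ) → ℝ) (x z : Fin n → ℝ) : ℝ :=
  iteratedDeriv 2 (fun t : ℝ => f (x + t • z)) 0

/-- First-order conditions (NSDP-1C) at `(x,Λ)`: `∇f(x) = DC_x*(Λ)` (w.r.t. the dot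
product on `ℝ^n` and the trace inner product on `S^d`), `ΛC(x) = 0`, `C(x) ⪰ 0`, `Λ ⪰ 0`. -/
noncomputable def NSDP1C {n d : ℕ} (f : (Fin n → ℝ) → ℝ)
    (C : (Fin n → ℝ) → Matrix (Fin d) (Fin d) ℝ)
    (x : Fin n → ℝ) (Λ : Matrix (Fin d) (Fin d) ℝ) : Prop :=
  Λ.IsSymm ∧
  (∀ z : Fin n → ℝ, HasDerivAt (fun t : ℝ => f (x + t • z)) ((Λ * DC C x z).trace) 0) ∧
  Λ * C x = 0 ∧ (C x).PosSemidef ∧ Λ.PosSemidef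

/-- Second-order necessary conditions (NSDP-2NC) at `(x,Λ)`. -/
noncomputable def NSDP2NC {n d : ℕ} (f : (Fin n → ℝ) → ℝ)
    (C : (Fin n → ℝ) → Matrix (Fin d) (Fin d) ℝ)
    (x : Fin n → ℝ) (Λ : Matrix (Fin d) (Fin d) ℝ) : Prop :=
  NSDP1C f C x Λ ∧
    ∀ V : Matrix (Fin d) (Fin (d - (C x).rank)) ℝ, Vᵀ * V = 1 → C x * V = 0 →
      ∀ P : Matrix (Fin d) (Fin d) ℝ, IsMoorePenrose (C x) P →
        ∀ z : Fin n → ℝ, Vᵀ * DC C x z * V = 0 →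
          0 ≤ D2f f x z - (Λ * D2C C x z).trace
              + 2 * (DC C x z * P * DC C x z * Λ).trace

/-- Second-order necessary conditions (SSV-2NC) at `(x,F,Λ)`. -/
noncomputable def SSV2NC {n d : ℕ} (f : (Fin n → ℝ) → ℝ)
    (C : (Fin n → ℝ) → Matrix (Fin d) (Fin d) ℝ)
    (x : Fin n → ℝ) (F Λ : Matrix (Fin d) (Fin d) ℝ) : Prop :=
  (Λ.IsSymm ∧
    (∀ z : Fin n → ℝ, HasDerivAt (fun t : ℝ => f (x + t • z)) ((Λ * DC C x z).trace) 0) ∧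
    Λ * F = 0 ∧ C x = F * Fᵀ) ∧
  ∀ (z : Fin n → ℝ) (Δ : Matrix (Fin d) (Fin d) ℝ),
    DC C x z = F * Δᵀ + Δ * Fᵀ →
      0 ≤ D2f f x z + 2 * (Λ * Δ * Δᵀ).trace - (Λ * D2C C x z).trace

/-!
Write `X = C x = F * Fᵀ`, `A = DC C x z`, let `P` be the pseudoinverse of `X` and `Q = X * P` the
orthogonal projector onto the range of `X`. The condition `Vᵀ * A * V = 0` says that
`(1 - Q) * A * (1 - Q) = 0`, that is `A = A * Q + Q * A - Q * A * Q`, and then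
`Δ = (A - ½ Q * A) * P * F` satisfies `A = F * Δᵀ + Δ * Fᵀ`. Since `Λ * Q = 0`, the term
`tr (Λ * Δ * Δᵀ)` of the (SSV) condition collapses to the curvature term `tr (A * P * A * Λ)` of
(NSDP).

For `Λ ⪰ 0`, take `z = 0`: if `F` is invertible then `Λ = 0`; otherwise `F *ᵥ w = 0` for some
`w ≠ 0`, and `Δ = vecMulVec u w` gives `0 ≤ (u ⬝ᵥ Λ *ᵥ u) * (w ⬝ᵥ w)` for every `u`.
-/

section KernelBasis

variable {K l m n ι : Type*} [Field K] [Fintype n] [Fintype ι] [DecidableEq ι]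

theorem range_mulVecLin_eq_ker_of_card_add_rank {X : Matrix m n K} {V : Matrix n ι K}
    {W : Matrix ι n K} (hWV : W * V = 1) (hXV : X * V = 0)
    (hcard : Fintype.card ι + X.rank = Fintype.card n) :
    LinearMap.range V.mulVecLin = LinearMap.ker X.mulVecLin := by
  have hle : LinearMap.range V.mulVecLin ≤ LinearMap.ker X.mulVecLin := by
    rw [LinearMap.range_le_ker_iff, ← Matrix.mulVecLin_mul, hXV, Matrix.mulVecLin_zero]
  have hrange : Module.finrank K (LinearMap.range V.mulVecLin) = Fintype.card ι := by
    have hinj : Function.Injective V.mulVecLin :=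
      Function.LeftInverse.injective (g := W.mulVec) fun c => by
        rw [Matrix.mulVecLin_apply, Matrix.mulVec_mulVec, hWV, Matrix.one_mulVec]
    rw [LinearMap.finrank_range_of_inj hinj, Module.finrank_fintype_fun_eq_card]
  have hker : X.rank + Module.finrank K (LinearMap.ker X.mulVecLin) = Fintype.card n := by
    rw [Matrix.rank, LinearMap.finrank_range_add_finrank_ker, Module.finrank_fintype_fun_eq_card]
  exact Submodule.eq_of_le_of_finrank_eq hle (by omega)

theorem mul_leftInverse_mul_of_mul_eq_zero {X : Matrix m n K} {V : Matrix n ι K}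
    {W : Matrix ι n K} {Y : Matrix n l K} (hWV : W * V = 1) (hXV : X * V = 0)
    (hcard : Fintype.card ι + X.rank = Fintype.card n) (hXY : X * Y = 0) :
    V * (W * Y) = Y := by
  ext i j
  have hcol : Y.col j ∈ LinearMap.range V.mulVecLin := by
    rw [range_mulVecLin_eq_ker_of_card_add_rank hWV hXV hcard, LinearMap.mem_ker]
    ext k
    exact congrFun (congrFun hXY k) j
  obtain ⟨c, hc⟩ := hcol
  have hfix : V *ᵥ (W *ᵥ Y.col j) = Y.col j := by
    rw [← hc, Matrix.mulVecLin_apply, Matrix.mulVec_mulVec c, hWV, Matrix.one_mulVec]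
  exact congrFun hfix i

end KernelBasis

namespace IsMoorePenrose

variable {d : ℕ} {X P P' A : Matrix (Fin d) (Fin d) ℝ}

theorem transpose (h : IsMoorePenrose X P) : IsMoorePenrose Xᵀ Pᵀ := by
  obtain ⟨hXPX, hPXP, hXP, hPX⟩ := h
  refine ⟨?_, ?_, ?_, ?_⟩
  · rw [← transpose_mul, ← transpose_mul, ← Matrix.mul_assoc, hXPX]
  · rw [← transpose_mul, ← transpose_mul, ← Matrix.mul_assoc, hPXP]
  · rw [← transpose_mul, hPX, hPX]
  · rw [← transpose_mul, hXP, hXP]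

theorem mul_right_unique (h : IsMoorePenrose X P) (h' : IsMoorePenrose X P') :
    X * P = X * P' := by
  obtain ⟨hXPX, -, hXP, -⟩ := h
  obtain ⟨hXPX', -, hXP', -⟩ := h'
  calc X * P = (X * P' * X * P)ᵀ := by rw [hXPX', hXP]
    _ = X * P * (X * P') := by rw [Matrix.mul_assoc (X * P'), transpose_mul, hXP, hXP']
    _ = X * P' := by rw [← Matrix.mul_assoc, hXPX]

theorem mul_left_unique (h : IsMoorePenrose X P) (h' : IsMoorePenrose X P') :
    P * X = P' * X := by
  rw [← transpose_inj, transpose_mul, transpose_mul]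
  exact h.transpose.mul_right_unique h'.transpose

theorem unique (h : IsMoorePenrose X P) (h' : IsMoorePenrose X P') : P = P' := by
  calc P = P * X * P := h.2.1.symm
    _ = P' * X * P' := by
      rw [Matrix.mul_assoc, h.mul_right_unique h', ← Matrix.mul_assoc, h.mul_left_unique h']
    _ = P' := h'.2.1

theorem isSymm (h : IsMoorePenrose X P) (hX : X.IsSymm) : P.IsSymm := by
  have hT : IsMoorePenrose X Pᵀ := by simpa only [hX.eq] using h.transpose
  exact hT.unique h

theorem commute (h : IsMoorePenrose X P) (hX : X.IsSymm) : Commute X P := by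
  rw [commute_iff_eq, ← h.2.2.1, transpose_mul, hX.eq, (h.isSymm hX).eq]

theorem compl_mul_mul_compl_eq_zero {ι : Type*} [Fintype ι] [DecidableEq ι]
    {V : Matrix (Fin d) ι ℝ} (h : IsMoorePenrose X P) (hX : X.IsSymm) (hV : Vᵀ * V = 1)
    (hXV : X * V = 0) (hcard : Fintype.card ι + X.rank = d) (hA : Vᵀ * A * V = 0) :
    (1 - X * P) * A * (1 - X * P) = 0 := by
  set R := 1 - X * P with hR
  have hRsymm : Rᵀ = R := by rw [hR, transpose_sub, transpose_one, h.2.2.1]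
  have hXR : X * R = 0 := by
    rw [hR, (h.commute hX).eq, Matrix.mul_sub, Matrix.mul_one, ← Matrix.mul_assoc, h.1, sub_self]
  have hVR : V * (Vᵀ * R) = R :=
    mul_leftInverse_mul_of_mul_eq_zero hV hXV (by rwa [Fintype.card_fin]) hXR
  calc R * A * R = (V * (Vᵀ * R))ᵀ * A * (V * (Vᵀ * R)) := by rw [hVR, hRsymm]
    _ = (Vᵀ * R)ᵀ * (Vᵀ * A * V) * (Vᵀ * R) := by
      simp only [transpose_mul, Matrix.mul_assoc]
    _ = 0 := by rw [hA, Matrix.mul_zero, Matrix.zero_mul]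

end IsMoorePenrose

section FactorVariation

variable {m n : Type*} [Fintype m] [Fintype n]

/-- The variation `Δ` of the factor `F` which realizes a variation `A` of `F * Fᵀ` to first order,
where `P` stands for the pseudoinverse of `F * Fᵀ`. The coefficient `½` splits the doubly counted
block `Q * A * Q`, `Q = F * Fᵀ * P`, evenly between `F * Δᵀ` and `Δ * Fᵀ`. -/
noncomputable def factorVariation (F : Matrix m n ℝ) (P A : Matrix m m ℝ) : Matrix m n ℝ :=
  (A - (1 / 2 : ℝ) • (F * Fᵀ * P * A)) * P * F

theorem mul_factorVariation {F : Matrix m n ℝ} {P A Λ : Matrix m m ℝ} (hΛF : Λ * F = 0) :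
    Λ * factorVariation F P A = Λ * A * P * F := by
  simp only [factorVariation, ← Matrix.mul_assoc, Matrix.mul_sub, Matrix.mul_smul, hΛF,
    Matrix.zero_mul, smul_zero, sub_zero]

variable {d : ℕ} {F : Matrix (Fin d) n ℝ} {P A Λ : Matrix (Fin d) (Fin d) ℝ}

theorem factorVariation_mul_transpose (hP : IsMoorePenrose (F * Fᵀ) P) :
    factorVariation F P A * Fᵀ =
      A * (F * Fᵀ * P) - (1 / 2 : ℝ) • (F * Fᵀ * P * A * (F * Fᵀ * P)) := by
  have hX : (F * Fᵀ).IsSymm := transpose_mul F Fᵀ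
  rw [factorVariation, Matrix.mul_assoc, Matrix.mul_assoc, ← (hP.commute hX).eq,
    Matrix.sub_mul, Matrix.smul_mul]

theorem mul_transpose_factorVariation (hP : IsMoorePenrose (F * Fᵀ) P) (hA : A.IsSymm) :
    F * (factorVariation F P A)ᵀ =
      F * Fᵀ * P * A - (1 / 2 : ℝ) • (F * Fᵀ * P * A * (F * Fᵀ * P)) := by
  have hQ : (F * Fᵀ * P)ᵀ = F * Fᵀ * P := hP.2.2.1
  have hT : F * (factorVariation F P A)ᵀ = (factorVariation F P A * Fᵀ)ᵀ := by
    rw [transpose_mul, transpose_transpose]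
  rw [hT, factorVariation_mul_transpose hP]
  generalize F * Fᵀ * P = Q at *
  simp only [transpose_sub, transpose_smul, transpose_mul, hQ, hA.eq, Matrix.mul_assoc]

theorem eq_mul_transpose_factorVariation_add (hP : IsMoorePenrose (F * Fᵀ) P) (hA : A.IsSymm)
    (hcompl : (1 - F * Fᵀ * P) * A * (1 - F * Fᵀ * P) = 0) :
    A = F * (factorVariation F P A)ᵀ + factorVariation F P A * Fᵀ := by
  rw [mul_transpose_factorVariation hP hA, factorVariation_mul_transpose hP]
  generalize F * Fᵀ * P = Q at *
  have hexpand : (1 - Q) * A * (1 - Q) = A - (A * Q + Q * A - Q * A * Q) := by noncomm_ring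
  have hblocks : A = A * Q + Q * A - Q * A * Q := sub_eq_zero.1 (hexpand ▸ hcompl)
  conv_lhs => rw [hblocks]
  module

theorem trace_mul_factorVariation_mul_transpose (hP : IsMoorePenrose (F * Fᵀ) P)
    (hA : A.IsSymm) (hΛ : Λ.IsSymm) (hΛF : Λ * F = 0) :
    (Λ * factorVariation F P A * (factorVariation F P A)ᵀ).trace = (A * P * A * Λ).trace := by
  have hQΛ : F * Fᵀ * P * Λ = 0 := by
    rw [← hP.2.2.1, ← hΛ.eq, ← transpose_mul, Matrix.mul_assoc, ← Matrix.mul_assoc, hΛF,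
      Matrix.zero_mul, transpose_zero]
  set Q := F * Fᵀ * P with hQ
  have hPQ : P * Q = P := by rw [hQ, ← Matrix.mul_assoc, hP.2.1]
  have hvanish : (Λ * A * P * Q * A * Q).trace = 0 := by
    rw [trace_mul_comm]
    simp only [← Matrix.mul_assoc, hQΛ, Matrix.zero_mul, trace_zero]
  calc (Λ * factorVariation F P A * (factorVariation F P A)ᵀ).trace
      = (Λ * A * P * (Q * A - (1 / 2 : ℝ) • (Q * A * Q))).trace := by
        rw [mul_factorVariation hΛF, Matrix.mul_assoc _ F, mul_transpose_factorVariation hP hA]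
    _ = (Λ * A * (P * Q) * A).trace - (1 / 2) * (Λ * A * P * Q * A * Q).trace := by
        simp only [Matrix.mul_sub, Matrix.mul_smul, trace_sub, trace_smul, smul_eq_mul,
          Matrix.mul_assoc]
    _ = (A * P * A * Λ).trace := by
        rw [hPQ, hvanish, mul_zero, sub_zero, trace_mul_comm (A * P * A)]
        simp only [Matrix.mul_assoc]

end FactorVariation

section PosSemidef

variable {m n R : Type*} [Fintype m] [Fintype n]

theorem trace_mul_vecMulVec_mul_transpose [CommSemiring R] (L : Matrix m m R) (u : m → R)
    (w : n → R) :
    (L * vecMulVec u w * (vecMulVec u w)ᵀ).trace = (w ⬝ᵥ w) * (u ⬝ᵥ L *ᵥ u) := by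
  rw [transpose_vecMulVec, Matrix.mul_assoc, vecMulVec_mul_vecMulVec, mul_vecMulVec,
    trace_vecMulVec, dotProduct_smul, smul_eq_mul, dotProduct_comm (L *ᵥ u)]

theorem posSemidef_of_trace_mul_mul_transpose_nonneg {L F : Matrix m m ℝ}
    (hL : L.IsSymm) (hLF : L * F = 0)
    (h : ∀ D : Matrix m m ℝ, D * Fᵀ = 0 → 0 ≤ (L * D * Dᵀ).trace) : L.PosSemidef := by
  classical
  by_cases hdet : F.det = 0
  · obtain ⟨w, hw, hFw⟩ := exists_mulVec_eq_zero_iff.2 hdet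
    have hww : 0 < w ⬝ᵥ w := by simpa only [star_trivial] using dotProduct_star_self_pos_iff.2 hw
    refine PosSemidef.of_dotProduct_mulVec_nonneg hL fun u => ?_
    have hDF : vecMulVec u w * Fᵀ = 0 := by
      rw [vecMulVec_mul, vecMul_transpose, hFw, vecMulVec_zero]
    have htrace := h _ hDF
    rw [trace_mul_vecMulVec_mul_transpose] at htrace
    simpa only [star_trivial] using nonneg_of_mul_nonneg_right htrace hww
  · have hL0 : L = 0 := by
      rw [← mul_nonsing_inv_cancel_right F L (isUnit_iff_ne_zero.2 hdet), hLF, Matrix.zero_mul]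
    exact hL0 ▸ PosSemidef.zero

end PosSemidef

section DirectionalDerivatives

variable {n d : ℕ}

theorem DC_zero_right (C : (Fin n → ℝ) → Matrix (Fin d) (Fin d) ℝ) (x : Fin n → ℝ) :
    DC C x 0 = 0 := by
  ext i j
  simp [DC]

theorem D2C_zero_right (C : (Fin n → ℝ) → Matrix (Fin d) (Fin d) ℝ) (x : Fin n → ℝ) :
    D2C C x 0 = 0 := by
  ext i j
  simp [D2C, iteratedDeriv_const]

theorem D2f_zero_right (f : (Fin n → ℝ) → ℝ) (x : Fin n → ℝ) : D2f f x 0 = 0 := by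
  simp [D2f, iteratedDeriv_const]

theorem isSymm_DC {C : (Fin n → ℝ) → Matrix (Fin d) (Fin d) ℝ} (hC : ∀ x, (C x).IsSymm)
    (x z : Fin n → ℝ) : (DC C x z).IsSymm := by
  ext i j
  simp only [DC, transpose_apply, of_apply, (hC _).apply i j]

end DirectionalDerivatives

namespace SSV2NC

variable {n d : ℕ} {f : (Fin n → ℝ) → ℝ} {C : (Fin n → ℝ) → Matrix (Fin d) (Fin d) ℝ}
  {x : Fin n → ℝ} {F Λ : Matrix (Fin d) (Fin d) ℝ}

theorem posSemidef (h : SSV2NC f C x F Λ) : Λ.PosSemidef := by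
  obtain ⟨⟨hΛ, -, hΛF, -⟩, hsecond⟩ := h
  refine posSemidef_of_trace_mul_mul_transpose_nonneg hΛ hΛF fun D hDF => ?_
  have hFD : F * Dᵀ = 0 := by
    rw [← transpose_inj, transpose_mul, transpose_transpose, hDF, transpose_zero]
  have hnonneg := hsecond 0 D (by rw [DC_zero_right, hFD, hDF, add_zero])
  rw [D2f_zero_right, D2C_zero_right, Matrix.mul_zero, trace_zero] at hnonneg
  linarith

theorem nsdp1C (h : SSV2NC f C x F Λ) : NSDP1C f C x Λ := by
  have hΛpos := h.posSemidef
  obtain ⟨⟨hΛ, hgrad, hΛF, hCF⟩, -⟩ := h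
  refine ⟨hΛ, hgrad, ?_, ?_, hΛpos⟩
  · rw [hCF, ← Matrix.mul_assoc, hΛF, Matrix.zero_mul]
  · rw [hCF]
    exact posSemidef_self_mul_conjTranspose F

end SSV2NC

theorem statement11_general {n d : ℕ} {f : (Fin n → ℝ) → ℝ}
    {C : (Fin n → ℝ) → Matrix (Fin d) (Fin d) ℝ} {x : Fin n → ℝ}
    {F Λ : Matrix (Fin d) (Fin d) ℝ} (hDC : ∀ z, (DC C x z).IsSymm)
    (h : SSV2NC f C x F Λ) : NSDP2NC f C x Λ := by
  refine ⟨h.nsdp1C, fun V hV hXV P hP z hz => ?_⟩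
  obtain ⟨⟨hΛ, -, hΛF, hCF⟩, hsecond⟩ := h
  have hcard : Fintype.card (Fin (d - (C x).rank)) + (C x).rank = d := by
    rw [Fintype.card_fin, Nat.sub_add_cancel (C x).rank_le_width]
  have hX : (C x).IsSymm := hCF ▸ isSymm_mul_transpose_self F
  have hcompl := hP.compl_mul_mul_compl_eq_zero hX hV hXV hcard hz
  rw [hCF] at hP hcompl
  have hnonneg := hsecond z (factorVariation F P (DC C x z))
    (eq_mul_transpose_factorVariation_add hP (hDC z) hcompl)
  rw [trace_mul_factorVariation_mul_transpose hP (hDC z) hΛ hΛF] at hnonneg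
  linarith

/-- If `(x,F,Λ)` satisfies 2NC for (SSV), then `(x,Λ)` satisfies 2NC for (NSDP). -/
theorem statement11 {n d : ℕ} (f : (Fin n → ℝ) → ℝ)
    (C : (Fin n → ℝ) → Matrix (Fin d) (Fin d) ℝ)
    (hf : ContDiff ℝ 2 f)
    (hC : ∀ i j, ContDiff ℝ 2 fun x => C x i j)
    (hCsymm : ∀ x, (C x).IsSymm)
    (x : Fin n → ℝ) (F Λ : Matrix (Fin d) (Fin d) ℝ)
    (h2 : SSV2NC f C x F Λ) :
    NSDP2NC f C x Λ := by
  exact statement11_general (isSymm_DC hCsymm x) h2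
end
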